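/- The map φ = (φ₁,φ₂,φ₃) ↦ s(φ) = (1 + tan φ₂ tan φ₃, 1 + tan φ₃ tan φ₁, 1 + tan φ₁ tan φ₂) is a bijection from the open simplex A° = {φ ∈ ℝ³ : π/2 > φ₁ > φ₂ > φ₃ > 0} onto the open region {s ∈ ℝ³ : 1 < s₁ < s₂ < s₃}. -/

import Mathlib

/-!
In the coordinates `x = tan φ`, which preserve order and identify `(0, π / 2)` with `(0, ∞)`, the
map becomes `(x, y, z) ↦ (y z, z x, x y)` followed by translation by `1` in each coordinate. On
positive triples the products determine the factors, because `x² = (z x) (x y) / (y z)`, and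
`y z < z x ↔ y < x`, so decreasing triples correspond to increasing ones.
-/

open Set Real

theorem bijOn_inter_of_mem_iff {α β : Type*} {f : α → β} {s s' : Set α} {t t' : Set β}
    (hf : BijOn f s t) (h : ∀ x ∈ s, f x ∈ t' ↔ x ∈ s') : BijOn f (s ∩ s') (t ∩ t') := by
  have hs : s ∩ f ⁻¹' (t ∩ t') = s ∩ s' := by
    ext x
    exact and_congr_right fun hx => (and_iff_right (hf.mapsTo hx)).trans (h x hx)
  exact hs ▸ hf.subset_right inter_subset_left

section ChainTriples

variable {α β : Type*}

/-- The triples of elements of `s` whose consecutive entries are related by `r`: for `r = (· > ·)`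
the strictly decreasing triples, for `r = (· < ·)` the strictly increasing ones. Triples are
encoded as nested pairs `(x, y, z) : α × α × α`. -/
def chainTriples (r : α → α → Prop) (s : Set α) : Set (α × α × α) :=
  (s ×ˢ s ×ˢ s) ∩ {p | r p.1 p.2.1 ∧ r p.2.1 p.2.2}

theorem chainTriples_gt_Ioo [Preorder α] (a b : α) :
    chainTriples (· > ·) (Ioo a b) =
      {p | b > p.1 ∧ p.1 > p.2.1 ∧ p.2.1 > p.2.2 ∧ p.2.2 > a} := by
  ext ⟨x, y, z⟩
  constructor
  · rintro ⟨⟨⟨-, hxb⟩, -, haz, -⟩, hyx, hzy⟩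
    exact ⟨hxb, hyx, hzy, haz⟩
  · rintro ⟨hxb, hyx, hzy, haz⟩
    have hay : a < y := haz.trans hzy
    have hyb : y < b := hyx.trans hxb
    exact ⟨⟨⟨hay.trans hyx, hxb⟩, ⟨hay, hyb⟩, haz, hzy.trans hyb⟩, hyx, hzy⟩

theorem chainTriples_lt_Ioi [Preorder α] (a : α) :
    chainTriples (· < ·) (Ioi a) = {p | a < p.1 ∧ p.1 < p.2.1 ∧ p.2.1 < p.2.2} := by
  ext ⟨x, y, z⟩
  constructor
  · rintro ⟨⟨hax, -⟩, hxy, hyz⟩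
    exact ⟨hax, hxy, hyz⟩
  · rintro ⟨hax, hxy, hyz⟩
    have hay : a < y := hax.trans hxy
    exact ⟨⟨hax, hay, hay.trans hyz⟩, hxy, hyz⟩

theorem bijOn_prodMap_chainTriples {r : α → α → Prop} {r' : β → β → Prop} {f : α → β}
    {s : Set α} {t : Set β} (hf : BijOn f s t)
    (hr : ∀ x ∈ s, ∀ y ∈ s, r' (f x) (f y) ↔ r x y) :
    BijOn (Prod.map f (Prod.map f f)) (chainTriples r s) (chainTriples r' t) :=
  bijOn_inter_of_mem_iff (hf.prodMap (hf.prodMap hf)) fun _ ⟨hx, hy, hz⟩ =>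
    and_congr (hr _ hx _ hy) (hr _ hy _ hz)

end ChainTriples

section PairwiseProd

/-- The products `(y z, z x, x y)` of two entries of a triple `(x, y, z)`, each listed in the
position of the omitted entry. -/
def pairwiseProd {M : Type*} [Mul M] (p : M × M × M) : M × M × M :=
  (p.2.1 * p.2.2, p.2.2 * p.1, p.1 * p.2.1)

theorem sqrt_mul_mul_mul_div_mul {x y z : ℝ} (hx : 0 < x) (hy : 0 < y) (hz : 0 < z) :
    √(z * x * (x * y) / (y * z)) = x := by
  have h : z * x * (x * y) / (y * z) = x ^ 2 := by field_simp
  rw [h, sqrt_sq hx.le]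

theorem sqrt_mul_div_mul_sqrt_mul_div {a b c : ℝ} (ha : 0 < a) (hb : 0 < b) (hc : 0 < c) :
    √(c * a / b) * √(a * b / c) = a := by
  have h : c * a / b * (a * b / c) = a ^ 2 := by field_simp
  rw [← sqrt_mul (by positivity), h, sqrt_sq ha.le]

theorem bijOn_pairwiseProd_Ioi :
    BijOn (pairwiseProd (M := ℝ)) (Ioi 0 ×ˢ Ioi 0 ×ˢ Ioi 0) (Ioi 0 ×ˢ Ioi 0 ×ˢ Ioi 0) := by
  let g : ℝ × ℝ × ℝ → ℝ × ℝ × ℝ := fun ⟨a, b, c⟩ => (√(b * c / a), √(c * a / b), √(a * b / c))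
  have hinv : InvOn g pairwiseProd (Ioi 0 ×ˢ Ioi 0 ×ˢ Ioi 0) (Ioi 0 ×ˢ Ioi 0 ×ˢ Ioi 0) := by
    constructor
    · rintro ⟨x, y, z⟩ ⟨hx, hy, hz⟩
      exact Prod.ext (sqrt_mul_mul_mul_div_mul hx hy hz) <|
        Prod.ext (sqrt_mul_mul_mul_div_mul hy hz hx) (sqrt_mul_mul_mul_div_mul hz hx hy)
    · rintro ⟨a, b, c⟩ ⟨ha, hb, hc⟩
      exact Prod.ext (sqrt_mul_div_mul_sqrt_mul_div ha hb hc) <|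
        Prod.ext (sqrt_mul_div_mul_sqrt_mul_div hb hc ha) (sqrt_mul_div_mul_sqrt_mul_div hc ha hb)
  refine hinv.bijOn ?_ ?_
  · rintro ⟨x, y, z⟩ ⟨hx, hy, hz⟩
    simp only [pairwiseProd, mem_prod, mem_Ioi] at hx hy hz ⊢
    exact ⟨mul_pos hy hz, mul_pos hz hx, mul_pos hx hy⟩
  · rintro ⟨a, b, c⟩ ⟨ha, hb, hc⟩
    have h_sqrt {u v w : ℝ} (hu : 0 < u) (hv : 0 < v) (hw : 0 < w) : 0 < √(u * v / w) := by
      positivity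
    exact ⟨h_sqrt hb hc ha, h_sqrt hc ha hb, h_sqrt ha hb hc⟩

theorem bijOn_pairwiseProd_chainTriples :
    BijOn (pairwiseProd (M := ℝ)) (chainTriples (· > ·) (Ioi 0))
      (chainTriples (· < ·) (Ioi 0)) := by
  refine bijOn_inter_of_mem_iff bijOn_pairwiseProd_Ioi ?_
  rintro ⟨x, y, z⟩ ⟨hx, -, hz⟩
  have hyx : y * z < z * x ↔ y < x := by rw [mul_comm y, mul_lt_mul_iff_right₀ hz]
  have hzy : z * x < x * y ↔ z < y := by rw [mul_comm z, mul_lt_mul_iff_right₀ hx]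
  exact and_congr hyx hzy

end PairwiseProd

theorem strictMonoOn_tan_Ioo_zero : StrictMonoOn tan (Ioo 0 (π / 2)) :=
  strictMonoOn_tan.mono (Ioo_subset_Ioo_left (neg_nonpos.2 pi_div_two_pos.le))

theorem bijOn_tan_Ioo_zero : BijOn tan (Ioo 0 (π / 2)) (Ioi 0) :=
  ⟨fun _ hx => tan_pos_of_pos_of_lt_pi_div_two hx.1 hx.2, strictMonoOn_tan_Ioo_zero.injOn,
    fun y hy => ⟨arctan y, ⟨arctan_pos.2 hy, arctan_lt_pi_div_two y⟩, tan_arctan y⟩⟩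

/-- The map `φ ↦ (1 + tan φ₂ tan φ₃, 1 + tan φ₃ tan φ₁, 1 + tan φ₁ tan φ₂)` is a
bijection from the open simplex `A° = {π/2 > φ₁ > φ₂ > φ₃ > 0}` onto
`{1 < s₁ < s₂ < s₃}`. -/
theorem stmt_8 :
    Set.BijOn
      (fun φ : ℝ × ℝ × ℝ =>
        ((1 + Real.tan φ.2.1 * Real.tan φ.2.2,
          1 + Real.tan φ.2.2 * Real.tan φ.1,
          1 + Real.tan φ.1 * Real.tan φ.2.1) : ℝ × ℝ × ℝ))
      {φ : ℝ × ℝ × ℝ | Real.pi / 2 > φ.1 ∧ φ.1 > φ.2.1 ∧ φ.2.1 > φ.2.2 ∧ φ.2.2 > 0}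
      {s : ℝ × ℝ × ℝ | 1 < s.1 ∧ s.1 < s.2.1 ∧ s.2.1 < s.2.2} := by
  have h_tan : BijOn (Prod.map tan (Prod.map tan tan))
      (chainTriples (· > ·) (Ioo 0 (π / 2))) (chainTriples (· > ·) (Ioi 0)) :=
    bijOn_prodMap_chainTriples bijOn_tan_Ioo_zero fun _ hx _ hy =>
      strictMonoOn_tan_Ioo_zero.lt_iff_lt hy hx
  have h_add : BijOn (fun x : ℝ => 1 + x) (Ioi 0) (Ioi 1) := by
    simpa using (add_right_injective (1 : ℝ)).injOn.bijOn_image (s := Ioi 0)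
  have h_translate : BijOn (Prod.map (1 + ·) (Prod.map (1 + ·) (1 + ·)))
      (chainTriples (· < ·) (Ioi (0 : ℝ))) (chainTriples (· < ·) (Ioi 1)) :=
    bijOn_prodMap_chainTriples h_add fun _ _ _ _ => add_lt_add_iff_left 1
  rw [← chainTriples_gt_Ioo, ← chainTriples_lt_Ioi]
  exact h_translate.comp (bijOn_pairwiseProd_chainTriples.comp h_tan)
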